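/- Sequencing preserves the discrete-structure property of trace measures: let μ be a finite measure on 𝕋 that is discrete-structured, and let κ be a Markov kernel from 𝕋 to 𝕋 such that κ(u) is discrete-structured for every trace u. Define the measure β on 𝕋 by β(A) := ∫_𝕋 ∫_𝕋 1[u₁ and u₂ are disjoint] · 1_A(u₁ ++ u₂) dκ(u₁)(u₂) dμ(u₁). Then β is discrete-structured. -/

import Mathlib

open MeasureTheory
open scoped ENNReal NNReal

/-- The value space: reals together with Booleans. -/
abbrev V : Type := ℝ ⊕ Bool

/-- The base measure on values. -/
noncomputable def ν : Measure V :=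
  Measure.map Sum.inl (volume : Measure ℝ) + Measure.map Sum.inr (Measure.count : Measure Bool)

/-- The space of traces. -/
abbrev 𝕋 : Type := Σ s : Finset String, (↑s → V)

/-- Concatenation of traces (on overlapping names the first trace takes precedence;
for disjoint shapes this is the usual concatenation). -/
def tcat (u₁ u₂ : 𝕋) : 𝕋 :=
  ⟨u₁.1 ∪ u₂.1, fun k =>
    if h : k.1 ∈ u₁.1 then u₁.2 ⟨k.1, h⟩
    else u₂.2 ⟨k.1, (Finset.mem_union.mp k.2).resolve_left h⟩⟩

/-- A measure on traces is discrete-structured if almost every pair of traces is either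
equal, or disagrees at some name present in the shape of both. -/
def DiscreteStructured (μ : Measure 𝕋) : Prop :=
  ∀ᵐ p ∂(μ.prod μ),
    p.1 = p.2 ∨ ∃ (k : String) (h₁ : k ∈ p.1.1) (h₂ : k ∈ p.2.1),
      p.1.2 ⟨k, h₁⟩ ≠ p.2.2 ⟨k, h₂⟩

instance countable_char_aux : Countable Char :=
  Function.Injective.countable (f := Char.toNat) fun a b h => Char.ext (UInt32.toNat_inj.1 h)

instance countable_string_aux : Countable String :=
  Function.Injective.countable (f := String.toList) fun _ _ h => String.toList_inj.1 h

lemma measurableSet_eq_V {α : Type*} [MeasurableSpace α] {f g : α → V}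
    (hf : Measurable f) (hg : Measurable g) : MeasurableSet {a | f a = g a} := by
  let e : V → ℝ × ℝ := Sum.elim (fun x => (x, 0)) (fun b => (if b then 1 else 0, 1))
  have he : Measurable e :=
    Measurable.sumElim (measurable_id.prodMk measurable_const) (measurable_of_countable _)
  have hi : Function.Injective e := by
    rintro (x | x) (y | y) h
    · simpa [e] using h
    · simp [e] at h
    · simp [e] at h
    · cases x <;> cases y <;> simp [e] at h ⊢
  have : {a | f a = g a} = {a | e (f a) = e (g a)} := by
    ext a
    exact hi.eq_iff.symm
  rw [this]
  exact measurableSet_eq_fun (he.comp hf) (he.comp hg)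

/-- Value of a trace at a name, with a default. -/
noncomputable def lookupT (k : String) (u : 𝕋) : V :=
  if h : k ∈ u.1 then u.2 ⟨k, h⟩ else Sum.inl 0

lemma measurable_of_sigma {γ : Type*} [MeasurableSpace γ] {f : 𝕋 → γ}
    (h : ∀ s : Finset String, Measurable fun x : (↑s → V) => f ⟨s, x⟩) : Measurable f := by
  intro A hA
  refine MeasurableSpace.measurableSet_iInf.2 fun s => ?_
  exact h s hA

lemma measurable_sigma_mk' (s : Finset String) :
    Measurable (fun x : (↑s → V) => (⟨s, x⟩ : 𝕋)) := by
  intro A hA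
  exact MeasurableSpace.measurableSet_iInf.1 hA s

lemma measurableSet_shape (P : Finset String → Prop) : MeasurableSet {u : 𝕋 | P u.1} := by
  refine MeasurableSpace.measurableSet_iInf.2 fun s => ?_
  exact (MeasurableSet.const (P s) : MeasurableSet {_x : (↑s → V) | P s})

lemma measurable_lookupT (k : String) : Measurable (lookupT k) := by
  refine measurable_of_sigma fun s => ?_
  unfold lookupT
  by_cases h : k ∈ s
  · simp only [h, dite_true]
    exact measurable_pi_apply (⟨k, h⟩ : ↑s)
  · simp only [h, dite_false]
    exact measurable_const

lemma trace_eta (u : 𝕋) (s : Finset String) (h : u.1 = s) :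
    (⟨s, fun k => lookupT k.1 u⟩ : 𝕋) = u := by
  subst h
  obtain ⟨s, x⟩ := u
  congr 1
  funext k
  simp [lookupT]

lemma measurable_to_trace {α : Type*} [MeasurableSpace α] {f : α → 𝕋}
    (h1 : ∀ s, MeasurableSet {a | (f a).1 = s}) (h2 : ∀ k, Measurable fun a => lookupT k (f a)) :
    Measurable f := by
  intro A hA
  have : f ⁻¹' A = ⋃ s : Finset String, {a | (f a).1 = s} ∩
      {a | (⟨s, fun k => lookupT k.1 (f a)⟩ : 𝕋) ∈ A} := by
    ext a
    simp only [Set.mem_preimage, Set.mem_iUnion, Set.mem_inter_iff, Set.mem_ofPred_eq]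
    constructor
    · intro h
      exact ⟨_, rfl, by rwa [trace_eta _ _ rfl]⟩
    · rintro ⟨s, hs, h⟩
      rwa [trace_eta _ _ hs] at h
  rw [this]
  refine MeasurableSet.iUnion fun s => (h1 s).inter ?_
  have hm : Measurable fun a => (⟨s, fun k => lookupT k.1 (f a)⟩ : 𝕋) :=
    (measurable_sigma_mk' s).comp (measurable_pi_lambda _ fun k => h2 k.1)
  exact hm hA

lemma measurableSet_shape2 (P : Finset String → Finset String → Prop) :
    MeasurableSet {p : 𝕋 × 𝕋 | P p.1.1 p.2.1} := by
  have : {p : 𝕋 × 𝕋 | P p.1.1 p.2.1} = ⋃ s : Finset String,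
      {p : 𝕋 × 𝕋 | p.1.1 = s} ∩ {p : 𝕋 × 𝕋 | P s p.2.1} := by
    ext p
    simp
  rw [this]
  exact MeasurableSet.iUnion fun s =>
    (measurable_fst (measurableSet_shape (fun t => t = s))).inter
      (measurable_snd (measurableSet_shape (fun t => P s t)))

lemma lookupT_tcat (k : String) (u v : 𝕋) :
    lookupT k (tcat u v) = if k ∈ u.1 then lookupT k u else lookupT k v := by
  unfold lookupT tcat
  by_cases h : k ∈ u.1 <;> by_cases h' : k ∈ v.1 <;> simp [h, h']

lemma measurable_tcat : Measurable fun p : 𝕋 × 𝕋 => tcat p.1 p.2 := by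
  refine measurable_to_trace (fun s => measurableSet_shape2 fun a b => a ∪ b = s) fun k => ?_
  simp only [lookupT_tcat]
  exact Measurable.ite (measurableSet_shape2 fun a _ => k ∈ a)
    ((measurable_lookupT k).comp measurable_fst) ((measurable_lookupT k).comp measurable_snd)

/-- The good pairs. -/
def GoodP (u v : 𝕋) : Prop :=
  u = v ∨ ∃ k : String, k ∈ u.1 ∧ k ∈ v.1 ∧ lookupT k u ≠ lookupT k v

lemma goodP_iff (u v : 𝕋) : GoodP u v ↔
    (u = v ∨ ∃ (k : String) (h₁ : k ∈ u.1) (h₂ : k ∈ v.1), u.2 ⟨k, h₁⟩ ≠ v.2 ⟨k, h₂⟩) := by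
  unfold GoodP
  refine or_congr Iff.rfl (exists_congr fun k => ?_)
  constructor
  · rintro ⟨h1, h2, h⟩
    exact ⟨h1, h2, by simpa [lookupT, h1, h2] using h⟩
  · rintro ⟨h1, h2, h⟩
    exact ⟨h1, h2, by simpa [lookupT, h1, h2] using h⟩

lemma measurableSet_good : MeasurableSet {p : 𝕋 × 𝕋 | GoodP p.1 p.2} := by
  have hk : ∀ k, MeasurableSet {p : 𝕋 × 𝕋 | lookupT k p.1 = lookupT k p.2} := fun k =>
    measurableSet_eq_V ((measurable_lookupT k).comp measurable_fst)
      ((measurable_lookupT k).comp measurable_snd)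
  have : {p : 𝕋 × 𝕋 | GoodP p.1 p.2} =
      ({p : 𝕋 × 𝕋 | p.1.1 = p.2.1} ∩ ⋂ k, {p : 𝕋 × 𝕋 | lookupT k p.1 = lookupT k p.2}) ∪
      ⋃ k, ({p : 𝕋 × 𝕋 | k ∈ p.1.1 ∧ k ∈ p.2.1} ∩
        {p : 𝕋 × 𝕋 | lookupT k p.1 = lookupT k p.2}ᶜ) := by
    ext ⟨u, v⟩
    simp only [GoodP, Set.mem_ofPred_eq, Set.mem_union, Set.mem_inter_iff, Set.mem_iInter,
      Set.mem_iUnion, Set.mem_compl_iff, and_assoc]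
    refine or_congr ?_ Iff.rfl
    constructor
    · rintro rfl
      simp
    · rintro ⟨h1, h2⟩
      rw [← trace_eta u _ rfl, ← trace_eta v _ h1.symm]
      simp only [h2]
  rw [this]
  exact ((measurableSet_shape2 fun a b => a = b).inter (MeasurableSet.iInter hk)).union
    (MeasurableSet.iUnion fun k =>
      (measurableSet_shape2 fun a b => k ∈ a ∧ k ∈ b).inter (hk k).compl)

lemma ds_iff (μ : Measure 𝕋) [SFinite μ] :
    DiscreteStructured μ ↔ ∀ᵐ u ∂μ, ∀ᵐ v ∂μ, GoodP u v := by
  unfold DiscreteStructured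
  simp only [← goodP_iff]
  exact Measure.ae_prod_iff_ae_ae measurableSet_good

lemma tcat_good_left {u v : 𝕋} (u' v' : 𝕋) (h : ∃ k : String, k ∈ u.1 ∧ k ∈ v.1 ∧
    lookupT k u ≠ lookupT k v) : GoodP (tcat u u') (tcat v v') := by
  obtain ⟨k, h1, h2, h3⟩ := h
  refine Or.inr ⟨k, Finset.mem_union_left _ h1, Finset.mem_union_left _ h2, ?_⟩
  simpa [lookupT_tcat, h1, h2] using h3

lemma tcat_good_right {u u' v' : 𝕋} (hd : Disjoint u.1 u'.1)
    (h : GoodP u' v') : GoodP (tcat u u') (tcat u v') := by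
  rcases h with rfl | ⟨k, h1, h2, h3⟩
  · exact Or.inl rfl
  · refine Or.inr ⟨k, Finset.mem_union_right _ h1, Finset.mem_union_right _ h2, ?_⟩
    have : k ∉ u.1 := fun h => Finset.disjoint_left.1 hd h h1
    simpa [lookupT_tcat, this] using h3

/-- Sequencing a finite discrete-structured trace measure `μ` with a Markov kernel `κ`
all of whose values are discrete-structured yields a discrete-structured measure. -/
theorem seq_discreteStructured
    (μ : Measure 𝕋) [IsFiniteMeasure μ] (hμ : DiscreteStructured μ)
    (κ : ProbabilityTheory.Kernel 𝕋 𝕋) [ProbabilityTheory.IsMarkovKernel κ]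
    (hκ : ∀ u : 𝕋, DiscreteStructured (κ u))
    (β : Measure 𝕋)
    (hβ : ∀ A : Set 𝕋, MeasurableSet A →
      β A = ∫⁻ u₁, ∫⁻ u₂,
        (if Disjoint u₁.1 u₂.1 then A.indicator (fun _ => (1 : ℝ≥0∞)) (tcat u₁ u₂) else 0)
          ∂(κ u₁) ∂μ) :
    DiscreteStructured β := by
  have hD : MeasurableSet {p : 𝕋 × 𝕋 | Disjoint p.1.1 p.2.1} :=
    measurableSet_shape2 fun a b => Disjoint a b
  have hβ' : β = ((μ.compProd κ).restrict {p : 𝕋 × 𝕋 | Disjoint p.1.1 p.2.1}).map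
      (fun p => tcat p.1 p.2) := by
    ext A hA
    have hT := measurable_tcat hA
    rw [hβ A hA, Measure.map_apply measurable_tcat hA, Measure.restrict_apply hT,
      ← lintegral_indicator_one (hT.inter hD),
      Measure.lintegral_compProd (measurable_one.indicator (hT.inter hD))]
    refine lintegral_congr fun u => lintegral_congr fun v => ?_
    by_cases h : Disjoint u.1 v.1 <;> by_cases h' : tcat u v ∈ A <;>
      simp [Set.indicator, h, h']
  have key : ∀ P : 𝕋 → Prop, MeasurableSet {a | P a} → ((∀ᵐ a ∂β, P a) ↔
      ∀ᵐ u ∂μ, ∀ᵐ v ∂(κ u), Disjoint u.1 v.1 → P (tcat u v)) := by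
    intro P hP
    rw [hβ', ae_map_iff measurable_tcat.aemeasurable hP, ae_restrict_iff (by exact measurable_tcat hP)]
    have hm : MeasurableSet {p : 𝕋 × 𝕋 | Disjoint p.1.1 p.2.1 → P (tcat p.1 p.2)} :=
      hD.imp (measurable_tcat hP)
    exact Measure.ae_compProd_iff hm
  have : SFinite β := by rw [hβ']; infer_instance
  rw [ds_iff] at hμ ⊢
  have hG : MeasurableSet {a | ∀ᵐ b ∂β, GoodP a b} := by
    have := measurable_measure_prodMk_left (ν := β) measurableSet_good.compl
    exact this (measurableSet_singleton 0)
  rw [key _ hG]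
  filter_upwards [hμ] with u hu
  filter_upwards [(ds_iff (κ u)).1 (hκ u)] with u' hu' hd
  rw [key _ (by exact measurable_prodMk_left measurableSet_good)]
  filter_upwards [hu] with v hv
  rcases hv with rfl | hv
  · filter_upwards [hu'] with v' hv' _
    exact tcat_good_right hd hv'
  · exact Filter.Eventually.of_forall fun v' _ => tcat_good_left _ _ hv
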